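/- Let n ≥ 1, let P be an n×n nonnegative row sub-stochastic matrix, and let w ∈ ℝ^n with w ≥ 0. For c ∈ ℝ^n let x̲(c) and x̄(c) denote the minimal and maximal equilibrium of (P, w) with exogenous flow c. Then for every c* ∈ ℝ^n: (i) x̲(c* − t·𝟙) → x̲(c*) as t → 0+ (where 𝟙 is the all-ones vector); and (ii) x̄(c* + t·𝟙) → x̄(c*) as t → 0+. -/

import Mathlib

open Matrix Finset Filter Topology

/-- The saturation function `S_0^w`. -/
def sat {n : ℕ} (w y : Fin n → ℝ) : Fin n → ℝ := fun i => min (max (y i) 0) (w i)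

/-- `x` is an equilibrium of the network `(P, w)` with exogenous flow `c`. -/
def IsEquil {n : ℕ} (P : Matrix (Fin n) (Fin n) ℝ) (w c x : Fin n → ℝ) : Prop :=
  x = sat w (Pᵀ.mulVec x + c)

theorem exists_isFixedPt_le {ι : Type*} {F : (ι → ℝ) → (ι → ℝ)} (hmono : Monotone F)
    (hcont : Continuous F) {b x : ι → ℝ} (hb : ∀ y, b ≤ F y) (hx : F x ≤ x) :
    ∃ y, Function.IsFixedPt F y ∧ y ≤ x := by
  have hanti : Antitone fun k => F^[k] x := hmono.antitone_iterate_of_map_le hx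
  have hbd : ∀ k, b ≤ F^[k] x := fun k =>
    (by rw [Function.iterate_succ_apply']; exact hb _ : b ≤ F^[k + 1] x).trans
      (hanti k.le_succ)
  have hlim : Tendsto (fun k => F^[k] x) atTop (𝓝 fun i => ⨅ k, (F^[k] x) i) :=
    tendsto_pi_nhds.2 fun i => tendsto_atTop_ciInf (fun _ _ h => hanti h i)
      ⟨b i, by rintro _ ⟨k, rfl⟩; exact hbd k i⟩
  exact ⟨_, isFixedPt_of_tendsto_iterate hlim hcont.continuousAt, hanti.le_of_tendsto hlim 0⟩

theorem exists_isFixedPt_ge {ι : Type*} {F : (ι → ℝ) → (ι → ℝ)} (hmono : Monotone F)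
    (hcont : Continuous F) {b x : ι → ℝ} (hb : ∀ y, F y ≤ b) (hx : x ≤ F x) :
    ∃ y, Function.IsFixedPt F y ∧ x ≤ y := by
  have hiter : Monotone fun k => F^[k] x := hmono.monotone_iterate_of_le_map hx
  have hbd : ∀ k, F^[k] x ≤ b := fun k => (hiter k.le_succ).trans
    (by rw [Function.iterate_succ_apply']; exact hb _ : F^[k + 1] x ≤ b)
  have hlim : Tendsto (fun k => F^[k] x) atTop (𝓝 fun i => ⨆ k, (F^[k] x) i) :=
    tendsto_pi_nhds.2 fun i => tendsto_atTop_ciSup (fun _ _ h => hiter h i)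
      ⟨b i, by rintro _ ⟨k, rfl⟩; exact hbd k i⟩
  exact ⟨_, isFixedPt_of_tendsto_iterate hlim hcont.continuousAt, hiter.ge_of_tendsto hlim 0⟩

section Network

variable {n : ℕ} {P : Matrix (Fin n) (Fin n) ℝ} {w : Fin n → ℝ}

theorem sat_mono (w : Fin n → ℝ) : Monotone (sat w) := fun _ _ h i =>
  min_le_min (max_le_max (h i) le_rfl) le_rfl

theorem sat_nonneg (hw : 0 ≤ w) (y : Fin n → ℝ) : 0 ≤ sat w y := fun i =>
  le_min (le_max_right _ _) (hw i)

theorem sat_le (w y : Fin n → ℝ) : sat w y ≤ w := fun _ => min_le_right _ _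

theorem continuous_sat (w : Fin n → ℝ) : Continuous (sat w) := by
  unfold sat
  fun_prop

theorem monotone_sat_mulVec_add (hP : ∀ i j, 0 ≤ P i j) (w c : Fin n → ℝ) :
    Monotone fun x => sat w (Pᵀ.mulVec x + c) := fun x y h => by
  have hle : Pᵀ.mulVec x ≤ Pᵀ.mulVec y := fun i => by
    simp only [mulVec, dotProduct, transpose_apply]
    exact Finset.sum_le_sum fun j _ => mul_le_mul_of_nonneg_left (h j) (hP j i)
  exact sat_mono w (add_le_add_left hle c)

theorem continuous_sat_mulVec_add (P : Matrix (Fin n) (Fin n) ℝ) (w : Fin n → ℝ) :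
    Continuous fun p : (Fin n → ℝ) × (Fin n → ℝ) => sat w (Pᵀ.mulVec p.2 + p.1) :=
  (continuous_sat w).comp ((continuous_const.matrix_mulVec continuous_snd).add continuous_fst)

theorem monotone_of_isLeast_isEquil (hP : ∀ i j, 0 ≤ P i j) (hw : 0 ≤ w)
    {x : (Fin n → ℝ) → Fin n → ℝ} (hx : ∀ c, IsLeast {y | IsEquil P w c y} (x c)) :
    Monotone x := fun c c' h => by
  have hle : sat w (Pᵀ.mulVec (x c') + c) ≤ x c' :=
    (sat_mono w (add_le_add_right h _)).trans_eq (hx c').1.symm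
  obtain ⟨y, hy, hyx⟩ := exists_isFixedPt_le (monotone_sat_mulVec_add hP w c)
    ((continuous_sat_mulVec_add P w).comp (Continuous.prodMk_right c))
    (fun _ => sat_nonneg hw _) hle
  exact ((hx c).2 hy.symm).trans hyx

theorem monotone_of_isGreatest_isEquil (hP : ∀ i j, 0 ≤ P i j)
    {x : (Fin n → ℝ) → Fin n → ℝ} (hx : ∀ c, IsGreatest {y | IsEquil P w c y} (x c)) :
    Monotone x := fun c c' h => by
  have hle : x c ≤ sat w (Pᵀ.mulVec (x c) + c') :=
    (hx c).1.trans_le (sat_mono w (add_le_add_right h _))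
  obtain ⟨y, hy, hyx⟩ := exists_isFixedPt_ge (monotone_sat_mulVec_add hP w c')
    ((continuous_sat_mulVec_add P w).comp (Continuous.prodMk_right c'))
    (fun _ => sat_le w _) hle
  exact hyx.trans ((hx c').2 hy.symm)

theorem IsEquil.of_tendsto {α : Type*} {l : Filter α} [l.NeBot] {c x : α → Fin n → ℝ}
    {c₀ x₀ : Fin n → ℝ} (h : ∀ a, IsEquil P w (c a) (x a)) (hc : Tendsto c l (𝓝 c₀))
    (hx : Tendsto x l (𝓝 x₀)) : IsEquil P w c₀ x₀ :=
  tendsto_nhds_unique hx <|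
    (((continuous_sat_mulVec_add P w).tendsto (c₀, x₀)).comp (hc.prodMk_nhds hx)).congr
      fun a => (h a).symm

end Network

/-- one-sided continuity of the extremal equilibria along the all-ones
direction: `x̲(c* − t𝟙) → x̲(c*)` and `x̄(c* + t𝟙) → x̄(c*)` as `t → 0⁺`. -/
theorem extremal_equilibria_one_sided_limits
    {n : ℕ} (hn : 1 ≤ n) (P : Matrix (Fin n) (Fin n) ℝ)
    (hP : ∀ i j, 0 ≤ P i j) (hsub : ∀ i, ∑ j, P i j ≤ 1)
    (w : Fin n → ℝ) (hw : 0 ≤ w)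
    (xlo xhi : (Fin n → ℝ) → (Fin n → ℝ))
    (hlo : ∀ c, IsEquil P w c (xlo c) ∧ ∀ y, IsEquil P w c y → xlo c ≤ y)
    (hhi : ∀ c, IsEquil P w c (xhi c) ∧ ∀ y, IsEquil P w c y → y ≤ xhi c) :
    ∀ cstar : Fin n → ℝ,
      Tendsto (fun t : ℝ => xlo (fun i => cstar i - t)) (𝓝[>] 0) (𝓝 (xlo cstar)) ∧
      Tendsto (fun t : ℝ => xhi (fun i => cstar i + t)) (𝓝[>] 0) (𝓝 (xhi cstar)) := by
  intro c
  constructor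
  · have hmono : Monotone xlo := monotone_of_isLeast_isEquil hP hw fun c => ⟨(hlo c).1, (hlo c).2⟩
    have hanti : Antitone fun t : ℝ => xlo fun i => c i - t := fun s t h =>
      hmono fun i => sub_le_sub_left h _
    have hlim : Tendsto (fun t : ℝ => xlo fun i => c i - t) (𝓝[>] 0)
        (𝓝 fun i => sSup ((fun t : ℝ => xlo (fun j => c j - t) i) '' Set.Ioi 0)) :=
      tendsto_pi_nhds.2 fun i =>
        Antitone.tendsto_nhdsGT (f := fun t : ℝ => xlo (fun j => c j - t) i)
          (fun _ _ h => hanti h i) 0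
    have hc : Tendsto (fun (t : ℝ) i => c i - t) (𝓝[>] 0) (𝓝 c) :=
      ((by fun_prop : Continuous fun (t : ℝ) i => c i - t).tendsto' 0 c
        (by simp)).mono_left nhdsWithin_le_nhds
    convert hlim using 2
    refine le_antisymm ((hlo c).2 _ (.of_tendsto (fun _ => (hlo _).1) hc hlim))
      (le_of_tendsto hlim ?_)
    filter_upwards [self_mem_nhdsWithin] with t ht
    exact hmono fun i => sub_le_self _ (le_of_lt ht)
  · have hmono : Monotone xhi := monotone_of_isGreatest_isEquil hP fun c => ⟨(hhi c).1, (hhi c).2⟩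
    have hray : Monotone fun t : ℝ => xhi fun i => c i + t := fun s t h =>
      hmono fun i => add_le_add_right h _
    have hlim : Tendsto (fun t : ℝ => xhi fun i => c i + t) (𝓝[>] 0)
        (𝓝 fun i => sInf ((fun t : ℝ => xhi (fun j => c j + t) i) '' Set.Ioi 0)) :=
      tendsto_pi_nhds.2 fun i =>
        Monotone.tendsto_nhdsGT (f := fun t : ℝ => xhi (fun j => c j + t) i)
          (fun _ _ h => hray h i) 0
    have hc : Tendsto (fun (t : ℝ) i => c i + t) (𝓝[>] 0) (𝓝 c) :=
      ((by fun_prop : Continuous fun (t : ℝ) i => c i + t).tendsto' 0 c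
        (by simp)).mono_left nhdsWithin_le_nhds
    convert hlim using 2
    refine le_antisymm (ge_of_tendsto hlim ?_)
      ((hhi c).2 _ (.of_tendsto (fun _ => (hhi _).1) hc hlim))
    filter_upwards [self_mem_nhdsWithin] with t ht
    exact hmono fun i => le_add_of_nonneg_right (le_of_lt ht)
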